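/- For every ordered pair (x, y) of vertices of the Flower snark J_5 with d(x, y) ≥ 3, there exist at least two distinct neighbors x' of x such that J_5 − y has a right-good 2-factor with respect to x that does not contain the edge xx'. (This is the 2-factor criterion showing that the superedge (J_5)_{x,y} is doubly-right.) -/

import Mathlib

/-!
The Flower snark is hypohamiltonian, and a Hamiltonian cycle of the 19-vertex graph `J_5 - y` is a
2-factor that is right-good with respect to *every* vertex `x ≠ y`; it omits exactly one of the
three edges at `x` when `x` is not adjacent to `y`. So for `x` far from `y` it suffices to find two
Hamiltonian cycles of `J_5 - y` that omit different edges at `x`. This works in all cases but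
one: up to symmetry, when `y = z_0` and `x ∈ {x_2, x_3}`, both Hamiltonian cycles of `J_5 - y`
omit the edge `x_2 x_3`. There a 2-factor made of a 13-cycle through `x` and a 6-cycle supplies
the second omitted edge.

A 2-factor of `H - y` with oriented cycles is the same thing as a permutation of the vertices that
fixes `y`, has no 2-cycle and moves every other vertex along an edge. The components of the
2-factor are then the cycles of the permutation (`permGraph_reachable`), so writing the permutation
as a product of two disjoint list cycles, one odd and one even or empty, makes right-goodness
immediate (`Certificate.hasFactorAvoiding`). The rotations `i ↦ i + k` and the exchange of `z` with
`w` are automorphisms of `J_5`, so `y` may be taken among `x_0, y_0, z_0`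
(`DoublyRight.of_iso`); for these, explicit cycles are verified by computation.
-/

open SimpleGraph

/-- Vertices of the Flower snark `J_r`: a label in `Fin 4` (`0 ↦ x`, `1 ↦ y`, `2 ↦ z`,
`3 ↦ w`) together with an index in `ZMod r`. -/
abbrev FlowerVert (r : ℕ) := Fin 4 × ZMod r

/-- The defining edges of the Flower snark `J_r`:
`x_i x_{i+1}`, `x_i y_i`, `y_i z_i`, `y_i w_i`, `z_i w_{i+1}`, `w_i z_{i+1}`. -/
def flowerRel (r : ℕ) : FlowerVert r → FlowerVert r → Prop := fun a b =>
  (a.1 = 0 ∧ b.1 = 0 ∧ b.2 = a.2 + 1) ∨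
  (a.1 = 0 ∧ b.1 = 1 ∧ b.2 = a.2) ∨
  (a.1 = 1 ∧ b.1 = 2 ∧ b.2 = a.2) ∨
  (a.1 = 1 ∧ b.1 = 3 ∧ b.2 = a.2) ∨
  (a.1 = 2 ∧ b.1 = 3 ∧ b.2 = a.2 + 1) ∨
  (a.1 = 3 ∧ b.1 = 2 ∧ b.2 = a.2 + 1)

/-- The Flower snark `J_r`. -/
def flowerSnark (r : ℕ) : SimpleGraph (FlowerVert r) :=
  SimpleGraph.fromRel (flowerRel r)

/-- `F` is a 2-factor of `H − y`, viewed as a subgraph of `H` on the full vertex set: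
`F ≤ H`, no edge of `F` is incident to `y`, and every vertex other than `y` has degree
exactly `2` in `F`. -/
def IsTwoFactorOfDelete {V : Type*} (H F : SimpleGraph V) (y : V) : Prop :=
  F ≤ H ∧ (∀ v : V, ¬ F.Adj y v) ∧ ∀ v : V, v ≠ y → (F.neighborSet v).ncard = 2

/-- A 2-factor `F` of `H − y` is right-good with respect to `x` if the component of `F`
containing `x` is a cycle of odd length and every other component of `F` is a cycle of even
length. -/
def RightGood {V : Type*} (F : SimpleGraph V) (x y : V) : Prop :=
  Odd {u : V | F.Reachable u x}.ncard ∧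
  ∀ v : V, v ≠ y → ¬ F.Reachable v x → Even {u : V | F.Reachable u v}.ncard

/-! ### Symmetry -/

/-- `H - y` has a 2-factor that is right-good with respect to `x` and omits the edge `x x'`. -/
def HasFactorAvoiding {V : Type*} (H : SimpleGraph V) (x y x' : V) : Prop :=
  ∃ F : SimpleGraph V, IsTwoFactorOfDelete H F y ∧ RightGood F x y ∧ ¬ F.Adj x x'

/-- The superedge `H_{x,y}` is doubly-right: right-good 2-factors of `H - y` can avoid at least two
of the edges at `x`. -/
def DoublyRight {V : Type*} (H : SimpleGraph V) (x y : V) : Prop :=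
  ∃ x₁ x₂ : V, x₁ ≠ x₂ ∧ H.Adj x x₁ ∧ H.Adj x x₂ ∧
    HasFactorAvoiding H x y x₁ ∧ HasFactorAvoiding H x y x₂

lemma ncard_reachable_comap {V : Type*} (F : SimpleGraph V) (e : V ≃ V) (v : V) :
    {u : V | (F.comap e).Reachable u v}.ncard = {u : V | F.Reachable u (e v)}.ncard := by
  have h : {u : V | (F.comap e).Reachable u v} = e ⁻¹' {u : V | F.Reachable u (e v)} := by
    ext u
    exact (Iso.reachable_iff (φ := Iso.comap e F)).symm
  rw [h, Set.ncard_preimage_of_injective_subset_range e.injective (by simp)]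

lemma HasFactorAvoiding.of_iso {V : Type*} {H : SimpleGraph V} (e : H ≃g H) {x y x' : V}
    (h : HasFactorAvoiding H (e x) (e y) (e x')) : HasFactorAvoiding H x y x' := by
  obtain ⟨F, ⟨hle, hy, hdeg⟩, ⟨hodd, heven⟩, hF⟩ := h
  refine ⟨F.comap e.toEquiv, ⟨?_, ?_, ?_⟩, ⟨?_, ?_⟩, hF⟩
  · intro u v huv
    exact e.map_adj_iff.1 (hle huv)
  · intro v
    exact hy (e v)
  · intro v hv
    have hset : (F.comap e.toEquiv).neighborSet v = e.toEquiv ⁻¹' F.neighborSet (e v) := rfl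
    rw [hset, Set.ncard_preimage_of_injective_subset_range e.toEquiv.injective (by simp)]
    exact hdeg (e v) (e.injective.ne hv)
  · rw [ncard_reachable_comap]
    exact hodd
  · intro v hv hvx
    rw [ncard_reachable_comap]
    exact heven (e v) (e.injective.ne hv)
      fun h => hvx ((Iso.reachable_iff (φ := Iso.comap e.toEquiv F)).1 h)

/-- Being doubly-right is invariant under automorphisms. -/
lemma DoublyRight.of_iso {V : Type*} {H : SimpleGraph V} (e : H ≃g H) {x y : V}
    (h : DoublyRight H (e x) (e y)) : DoublyRight H x y := by
  obtain ⟨x₁, x₂, hne, h₁, h₂, f₁, f₂⟩ := h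
  obtain ⟨x₁, rfl⟩ := e.surjective x₁
  obtain ⟨x₂, rfl⟩ := e.surjective x₂
  exact ⟨x₁, x₂, fun h => hne (congrArg e h), e.map_adj_iff.1 h₁, e.map_adj_iff.1 h₂,
    f₁.of_iso e, f₂.of_iso e⟩

/-- The rotation of `J_r` adding `k` to every index. -/
def flowerRotation (r : ℕ) (k : ZMod r) : flowerSnark r ≃g flowerSnark r where
  toEquiv := (Equiv.refl (Fin 4)).prodCongr (Equiv.addRight k)
  map_rel_iff' := by
    rintro ⟨a, i⟩ ⟨b, j⟩
    simp [flowerSnark, flowerRel, add_right_comm _ k]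

/-- The automorphism of `J_r` exchanging `z_i` and `w_i` for all `i`. -/
def flowerExchange (r : ℕ) : flowerSnark r ≃g flowerSnark r where
  toEquiv := (Equiv.swap (2 : Fin 4) 3).prodCongr (Equiv.refl (ZMod r))
  map_rel_iff' := by
    rintro ⟨a, i⟩ ⟨b, j⟩
    fin_cases a <;> fin_cases b <;>
      simp [flowerSnark, flowerRel, Equiv.swap_apply_def]

/-! ### Two-factors from permutations -/

/-- The graph whose edges join each vertex moved by `s` to its image under `s`. -/
def permGraph {V : Type*} (s : Equiv.Perm V) : SimpleGraph V :=
  SimpleGraph.fromRel fun u v => s u = v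

lemma permGraph_adj {V : Type*} (s : Equiv.Perm V) (u v : V) :
    (permGraph s).Adj u v ↔ u ≠ v ∧ (s u = v ∨ s v = u) := Iff.rfl

lemma permGraph_reachable_apply {V : Type*} (s : Equiv.Perm V) (v : V) :
    (permGraph s).Reachable v (s v) := by
  by_cases h : v = s v
  · rw [← h]
  · exact Adj.reachable ((permGraph_adj s _ _).2 ⟨h, Or.inl rfl⟩)

lemma permGraph_reachable {V : Type*} [Finite V] (s : Equiv.Perm V) (u v : V) :
    (permGraph s).Reachable u v ↔ s.SameCycle u v := by
  constructor
  · rintro ⟨p⟩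
    induction p with
    | nil => exact Equiv.Perm.SameCycle.refl _ _
    | cons h _ ih =>
      rcases ((permGraph_adj s _ _).1 h).2 with rfl | rfl
      · exact Equiv.Perm.sameCycle_apply_left.1 ih
      · exact Equiv.Perm.sameCycle_apply_left.2 ih
  · intro h
    obtain ⟨n, -, rfl⟩ := h.exists_pow_eq'
    clear h
    induction n with
    | zero => exact Reachable.refl _
    | succ n ih =>
      rw [pow_succ', Equiv.Perm.mul_apply]
      exact ih.trans (permGraph_reachable_apply s _)

lemma permGraph_isTwoFactorOfDelete {V : Type*} {H : SimpleGraph V} {s : Equiv.Perm V} {y : V}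
    (hy : s y = y) (hs : ∀ v, v ≠ y → H.Adj v (s v) ∧ s (s v) ≠ v) :
    IsTwoFactorOfDelete H (permGraph s) y := by
  have hadj : ∀ u v, u ≠ v → s u = v → H.Adj u v := by
    rintro u v huv rfl
    exact (hs u fun h => huv (by rw [h, hy])).1
  refine ⟨?_, ?_, ?_⟩
  · intro u v huv
    obtain ⟨hne, h | h⟩ := (permGraph_adj s _ _).1 huv
    · exact hadj u v hne h
    · exact (hadj v u hne.symm h).symm
  · intro v hv
    obtain ⟨hne, h | h⟩ := (permGraph_adj s _ _).1 hv
    · exact hne (hy.symm.trans h)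
    · exact hne (s.injective (hy.trans h.symm))
  · intro v hv
    obtain ⟨hvs, hvss⟩ := hs v hv
    have hset : (permGraph s).neighborSet v = {s v, s.symm v} := by
      ext w
      rw [mem_neighborSet, permGraph_adj, Set.mem_insert_iff, Set.mem_singleton_iff,
        Equiv.eq_symm_apply, eq_comm (a := s v)]
      refine ⟨fun h => h.2, fun h => ⟨?_, h⟩⟩
      rintro rfl
      exact hvs.ne (h.elim id Eq.symm)
    rw [hset, Set.ncard_pair]
    intro h
    exact hvss (by rw [h, Equiv.apply_symm_apply])

/-- For disjoint lists `l` and `m`, the cycle of `l.formPerm * m.formPerm` through a vertex of `l`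
consists of the vertices of `l`. -/
lemma sameCycle_formPerm_mul_iff {V : Type*} [Finite V] [DecidableEq V] {l m : List V}
    (hl : l.Nodup) (hl2 : 2 ≤ l.length) (hlm : l.Disjoint m)
    (hcomm : Commute l.formPerm m.formPerm) {v : V} (hv : v ∈ l) (u : V) :
    (l.formPerm * m.formPerm).SameCycle u v ↔ u ∈ l := by
  have := Fintype.ofFinite V
  have hsupp : l.formPerm.support = l.toFinset :=
    List.support_formPerm_of_nodup l hl (by rintro a rfl; simp at hl2)
  have hlv : l.formPerm v ≠ v :=
    Equiv.Perm.mem_support.1 (by rw [hsupp]; exact List.mem_toFinset.2 hv)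
  have hmv : m.formPerm v = v := List.formPerm_apply_of_notMem (hlm hv)
  have hne : (l.formPerm * m.formPerm) v ≠ v := by
    rwa [Equiv.Perm.mul_apply, hmv]
  rw [Equiv.Perm.sameCycle_comm, ← Equiv.Perm.mem_support_cycleOf_iff' hne,
    Equiv.Perm.cycleOf_mul_of_apply_right_eq_self hcomm v hmv,
    (List.isCycle_formPerm hl hl2).cycleOf_eq hlv, hsupp, List.mem_toFinset]

/-- The pair of vertex lists `c` describes an oriented 2-factor of `H - y` consisting of an odd
cycle `c.1` and an even cycle `c.2`, where `c.2` may be empty, in which case `c.1` is a Hamiltonian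
cycle of `H - y`. -/
structure Certificate {V : Type*} [DecidableEq V] (H : SimpleGraph V) (y : V)
    (c : List V × List V) : Prop where
  nodup : c.1.Nodup ∧ c.2.Nodup
  disjoint : ∀ v ∈ c.1, v ∉ c.2
  cover : ∀ v, v ≠ y → v ∈ c.1 ∨ v ∈ c.2
  length : 2 ≤ c.1.length ∧ (c.2 = [] ∨ 2 ≤ c.2.length)
  parity : Odd c.1.length ∧ Even c.2.length
  fix : (c.1.formPerm * c.2.formPerm) y = y
  step : ∀ v, v ≠ y → H.Adj v ((c.1.formPerm * c.2.formPerm) v) ∧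
    (c.1.formPerm * c.2.formPerm) ((c.1.formPerm * c.2.formPerm) v) ≠ v

/-- The 2-factor described by `c` is right-good with respect to each vertex `x` of its odd cycle,
and omits the edge `x x'` when neither of its ends is the successor of the other. -/
lemma Certificate.hasFactorAvoiding {V : Type*} [Finite V] [DecidableEq V] {H : SimpleGraph V}
    {x y x' : V} {c : List V × List V} (hc : Certificate H y c) (hx : x ∈ c.1)
    (h₁ : (c.1.formPerm * c.2.formPerm) x ≠ x') (h₂ : (c.1.formPerm * c.2.formPerm) x' ≠ x) :
    HasFactorAvoiding H x y x' := by
  obtain ⟨l, m⟩ := c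
  obtain ⟨⟨hl, hm⟩, hlm, hcover, ⟨hl2, hm2⟩, ⟨hodd, heven⟩, hfix, hstep⟩ := hc
  dsimp only at *
  have hcomm : Commute l.formPerm m.formPerm := by
    rcases hm2 with rfl | hm2
    · simp
    · exact ((List.formPerm_disjoint_iff hl hm hl2 hm2).2 fun v => hlm v).commute
  have hcard : ∀ k : List V, k.Nodup → {u : V | u ∈ k}.ncard = k.length := by
    intro k hk
    rw [← List.toFinset_card_of_nodup hk, ← Set.ncard_coe_finset]
    congr 1
    ext; simp
  have hreach : ∀ v ∈ l, ∀ u, (permGraph (l.formPerm * m.formPerm)).Reachable u v ↔ u ∈ l :=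
    fun v hv u => (permGraph_reachable _ _ _).trans
      (sameCycle_formPerm_mul_iff hl hl2 (fun v => hlm v) hcomm hv u)
  refine ⟨_, permGraph_isTwoFactorOfDelete hfix hstep, ⟨?_, ?_⟩, ?_⟩
  · simp only [hreach x hx]
    rwa [hcard l hl]
  · intro v hvy hvx
    rw [hreach x hx] at hvx
    have hvm : v ∈ m := (hcover v hvy).resolve_left hvx
    have hm2 : 2 ≤ m.length := hm2.resolve_left (List.ne_nil_of_mem hvm)
    simp only [permGraph_reachable, hcomm.eq,
      sameCycle_formPerm_mul_iff hm hm2 (fun v hv hv' => hlm v hv' hv) hcomm.symm hvm]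
    rwa [hcard m hm]
  · rintro ⟨-, h | h⟩
    · exact h₁ h
    · exact h₂ h

/-! ### The explicit cycles in `J_5` -/

instance (r : ℕ) : DecidableRel (flowerRel r) := fun a b => by
  unfold flowerRel
  infer_instance

instance (r : ℕ) : DecidableRel (flowerSnark r).Adj := fun a b =>
  decidable_of_iff (a ≠ b ∧ (flowerRel r a b ∨ flowerRel r b a)) Iff.rfl

/-- The vertices `x` and `y` are at distance at least three, spelled out in a form that can be
evaluated. -/
def Far (x y : FlowerVert 5) : Prop :=
  x ≠ y ∧ ¬ (flowerSnark 5).Adj x y ∧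
    ∀ w, (flowerSnark 5).Adj x w → ¬ (flowerSnark 5).Adj w y

instance (x y : FlowerVert 5) : Decidable (Far x y) := by
  unfold Far
  infer_instance

lemma far_of_three_le_dist {x y : FlowerVert 5} (h : 3 ≤ (flowerSnark 5).dist x y) : Far x y := by
  refine ⟨?_, fun hxy => ?_, fun w hxw hwy => ?_⟩
  · rintro rfl
    simp at h
  · have := dist_le hxy.toWalk
    simp at this
    omega
  · have := dist_le (Walk.cons hxw hwy.toWalk)
    simp at this
    omega

lemma Far.map {x y : FlowerVert 5} (h : Far x y) (e : flowerSnark 5 ≃g flowerSnark 5) :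
    Far (e x) (e y) := by
  refine ⟨e.injective.ne h.1, fun hxy => h.2.1 (e.map_adj_iff.1 hxy), fun w hxw hwy => ?_⟩
  obtain ⟨w, rfl⟩ := e.surjective w
  exact h.2.2 w (e.map_adj_iff.1 hxw) (e.map_adj_iff.1 hwy)

set_option synthInstance.maxSize 512 in
instance (y : FlowerVert 5) (c : List (FlowerVert 5) × List (FlowerVert 5)) :
    Decidable (Certificate (flowerSnark 5) y c) :=
  decidable_of_iff
    ((c.1.Nodup ∧ c.2.Nodup) ∧ (∀ v ∈ c.1, v ∉ c.2) ∧ (∀ v, v ≠ y → v ∈ c.1 ∨ v ∈ c.2) ∧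
      (2 ≤ c.1.length ∧ (c.2 = [] ∨ 2 ≤ c.2.length)) ∧ (Odd c.1.length ∧ Even c.2.length) ∧
      (c.1.formPerm * c.2.formPerm) y = y ∧
      ∀ v, v ≠ y → (flowerSnark 5).Adj v ((c.1.formPerm * c.2.formPerm) v) ∧
        (c.1.formPerm * c.2.formPerm) ((c.1.formPerm * c.2.formPerm) v) ≠ v)
    ⟨fun ⟨h₁, h₂, h₃, h₄, h₅, h₆, h₇⟩ => ⟨h₁, h₂, h₃, h₄, h₅, h₆, h₇⟩,
      fun ⟨h₁, h₂, h₃, h₄, h₅, h₆, h₇⟩ => ⟨h₁, h₂, h₃, h₄, h₅, h₆, h₇⟩⟩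

/-- Some 2-factor in the list `T` has `x` on its odd cycle and omits the edge `x x'`. -/
def Omits (T : List (List (FlowerVert 5) × List (FlowerVert 5))) (x x' : FlowerVert 5) : Prop :=
  ∃ c ∈ T, x ∈ c.1 ∧ (c.1.formPerm * c.2.formPerm) x ≠ x' ∧
    (c.1.formPerm * c.2.formPerm) x' ≠ x

instance (T : List (List (FlowerVert 5) × List (FlowerVert 5))) (x x' : FlowerVert 5) :
    Decidable (Omits T x x') := by
  unfold Omits
  infer_instance

lemma doublyRight_of_certificates {y : FlowerVert 5}
    (T : List (List (FlowerVert 5) × List (FlowerVert 5)))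
    (hT : ∀ c ∈ T, Certificate (flowerSnark 5) y c)
    (h : ∀ x, Far x y → ∃ x₁, ((flowerSnark 5).Adj x x₁ ∧ Omits T x x₁) ∧
      ∃ x₂, x₁ ≠ x₂ ∧ (flowerSnark 5).Adj x x₂ ∧ Omits T x x₂)
    {x : FlowerVert 5} (hx : Far x y) : DoublyRight (flowerSnark 5) x y := by
  obtain ⟨x₁, ⟨a₁, c₁, hc₁, h₁, h₁', h₁''⟩, x₂, hne, a₂, c₂, hc₂, h₂, h₂', h₂''⟩ := h x hx
  exact ⟨x₁, x₂, hne, a₁, a₂, (hT c₁ hc₁).hasFactorAvoiding h₁ h₁' h₁'',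
    (hT c₂ hc₂).hasFactorAvoiding h₂ h₂' h₂''⟩

/-- Two Hamiltonian cycles of `J_5 - x_0` suffice. -/
lemma doublyRight_x {x : FlowerVert 5} (hx : Far x (0, 0)) :
    DoublyRight (flowerSnark 5) x (0, 0) :=
  doublyRight_of_certificates
    [([(1, 1), (0, 1), (0, 2), (1, 2), (2, 2), (3, 1), (2, 0), (1, 0),
        (3, 0), (2, 4), (3, 3), (1, 3), (0, 3), (0, 4), (1, 4), (3, 4),
        (2, 3), (3, 2), (2, 1)],
       []),
      ([(1, 1), (0, 1), (0, 2), (1, 2), (3, 2), (2, 1), (3, 0), (1, 0),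
        (2, 0), (3, 4), (2, 3), (1, 3), (0, 3), (0, 4), (1, 4), (2, 4),
        (3, 3), (2, 2), (3, 1)],
       [])]
    (by decide +kernel) (by decide +kernel) hx

/-- Four Hamiltonian cycles of `J_5 - y_0` suffice. -/
lemma doublyRight_y {x : FlowerVert 5} (hx : Far x (1, 0)) :
    DoublyRight (flowerSnark 5) x (1, 0) :=
  doublyRight_of_certificates
    [([(1, 1), (0, 1), (0, 0), (0, 4), (0, 3), (0, 2), (1, 2), (2, 2),
        (3, 3), (1, 3), (2, 3), (3, 2), (2, 1), (3, 0), (2, 4), (1, 4),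
        (3, 4), (2, 0), (3, 1)],
       []),
      ([(1, 1), (0, 1), (0, 0), (0, 4), (0, 3), (0, 2), (1, 2), (3, 2),
        (2, 3), (1, 3), (3, 3), (2, 2), (3, 1), (2, 0), (3, 4), (1, 4),
        (2, 4), (3, 0), (2, 1)],
       []),
      ([(1, 1), (2, 1), (3, 0), (2, 4), (1, 4), (0, 4), (0, 0), (0, 1),
        (0, 2), (0, 3), (1, 3), (3, 3), (2, 2), (1, 2), (3, 2), (2, 3),
        (3, 4), (2, 0), (3, 1)],
       []),
      ([(1, 1), (2, 1), (3, 0), (2, 4), (3, 3), (2, 2), (1, 2), (3, 2),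
        (2, 3), (1, 3), (0, 3), (0, 2), (0, 1), (0, 0), (0, 4), (1, 4),
        (3, 4), (2, 0), (3, 1)],
       [])]
    (by decide +kernel) (by decide +kernel) hx

/-- Both Hamiltonian cycles of `J_5 - z_0` omit the edge `x_2 x_3`, so a third 2-factor, made of a
13-cycle and a 6-cycle, is added to them. -/
lemma doublyRight_z {x : FlowerVert 5} (hx : Far x (2, 0)) :
    DoublyRight (flowerSnark 5) x (2, 0) :=
  doublyRight_of_certificates
    [([(1, 1), (0, 1), (0, 2), (1, 2), (3, 2), (2, 1), (3, 0), (1, 0),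
        (0, 0), (0, 4), (0, 3), (1, 3), (2, 3), (3, 4), (1, 4), (2, 4),
        (3, 3), (2, 2), (3, 1)],
       []),
      ([(1, 1), (2, 1), (3, 2), (2, 3), (3, 4), (1, 4), (0, 4), (0, 3),
        (1, 3), (3, 3), (2, 4), (3, 0), (1, 0), (0, 0), (0, 1), (0, 2),
        (1, 2), (2, 2), (3, 1)],
       []),
      ([(0, 0), (0, 1), (0, 2), (0, 3), (0, 4), (1, 4), (3, 4), (2, 3),
        (1, 3), (3, 3), (2, 4), (3, 0), (1, 0)],
       [(1, 1), (2, 1), (3, 2), (1, 2), (2, 2), (3, 1)])]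
    (by decide +kernel) (by decide +kernel) hx

/-- For every ordered pair `(x, y)` of vertices of the Flower snark `J_5` with
`d(x, y) ≥ 3`, there are at least two distinct neighbors `x'` of `x` such that `J_5 − y`
has a right-good 2-factor with respect to `x` not containing the edge `xx'`
(i.e. `(J_5)_{x,y}` is doubly-right). -/
theorem flowerSnark_five_doubly_right (x y : FlowerVert 5)
    (hdist : 3 ≤ (flowerSnark 5).dist x y) :
    ∃ x₁ x₂ : FlowerVert 5, x₁ ≠ x₂ ∧
      (flowerSnark 5).Adj x x₁ ∧ (flowerSnark 5).Adj x x₂ ∧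
      (∃ F : SimpleGraph (FlowerVert 5),
        IsTwoFactorOfDelete (flowerSnark 5) F y ∧ RightGood F x y ∧ ¬ F.Adj x x₁) ∧
      (∃ F : SimpleGraph (FlowerVert 5),
        IsTwoFactorOfDelete (flowerSnark 5) F y ∧ RightGood F x y ∧ ¬ F.Adj x x₂) := by
  change DoublyRight (flowerSnark 5) x y
  have hfar := (far_of_three_le_dist hdist).map (flowerRotation 5 (-y.2))
  refine DoublyRight.of_iso (flowerRotation 5 (-y.2)) ?_
  -- The rotation brings `y` to index `0`.
  have hy : flowerRotation 5 (-y.2) y = (y.1, 0) := Prod.ext rfl (add_neg_cancel y.2)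
  rw [hy] at hfar ⊢
  obtain ⟨a, i⟩ := y
  fin_cases a
  · exact doublyRight_x hfar
  · exact doublyRight_y hfar
  · exact doublyRight_z hfar
  · exact DoublyRight.of_iso (flowerExchange 5) (doublyRight_z (hfar.map (flowerExchange 5)))
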